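/- (Corollary 2.6: Hoeffding-type inequality.) Let (E,d) be a Polish metric space and ℙ a probability measure on E^n such that P_i(·|x^{i-1}) satisfies T_1(C) for all i and x^{i-1}, and condition (C1) holds with p = 1: there exist a_j ≥ 0 with r := Σ_{j=1}^∞ a_j < 1 and W_1^d(P_i(·|x^{i-1}), P_i(·|x̃^{i-1})) ≤ Σ_{j=1}^{i-1} a_j · d(x_{i-j}, x̃_{i-j}) for all i, x^{i-1}, x̃^{i-1}. Then for every f : E^n → ℝ such that for each k = 1,…,n, |f(…,x_k,…) − f(…,y_k,…)| ≤ α·d(x_k,y_k) when all other coordinates are fixed, one has 𝔼_ℙ exp(λ(f − 𝔼_ℙ f)) ≤ exp( C λ² α² n / (2(1−r)²) ) for all λ ∈ ℝ, and ℙ(f > 𝔼_ℙ f + t) ≤ exp( −t²(1−r)² / (2nCα²) ) for all t > 0. -/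

import Mathlib

open MeasureTheory ProbabilityTheory ENNReal

noncomputable section

/-- `π` is a coupling of `μ` and `ν`. -/
def IsCoupling {E F : Type*} [MeasurableSpace E] [MeasurableSpace F]
    (π : Measure (E × F)) (μ : Measure E) (ν : Measure F) : Prop :=
  π.map Prod.fst = μ ∧ π.map Prod.snd = ν

/-- The `L^p`-Wasserstein distance associated to the cost function `d`, valued in `ℝ≥0∞`. -/
def wassersteinDist {E : Type*} [MeasurableSpace E] (p : ℝ) (d : E → E → ℝ)
    (μ ν : Measure E) : ℝ≥0∞ :=
  ⨅ (π : Measure (E × E)) (_ : IsCoupling π μ ν),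
    (∫⁻ z, ENNReal.ofReal (d z.1 z.2) ^ p ∂π) ^ (1 / p)

/-- The `L^p`-Wasserstein distance for an extended (`ℝ≥0∞`-valued) pseudo-metric `d`. -/
def wassersteinDistE {E : Type*} [MeasurableSpace E] (p : ℝ) (d : E → E → ℝ≥0∞)
    (μ ν : Measure E) : ℝ≥0∞ :=
  ⨅ (π : Measure (E × E)) (_ : IsCoupling π μ ν),
    (∫⁻ z, d z.1 z.2 ^ p ∂π) ^ (1 / p)

open Classical in
/-- Relative entropy (Kullback information) `H(ν | μ)`, valued in `ℝ≥0∞`. -/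
def relEntropy {E : Type*} [MeasurableSpace E] (ν μ : Measure E) : ℝ≥0∞ :=
  if ν ≪ μ ∧ Integrable (fun x => Real.log ((ν.rnDeriv μ x).toReal)) ν then
    ENNReal.ofReal (∫ x, Real.log ((ν.rnDeriv μ x).toReal) ∂ν)
  else ∞

/-- The transportation cost-information inequality `T_p(C)` for `μ` on `(E, d)`:
`W_p(μ, ν) ≤ √(2 C H(ν|μ))` for every probability measure `ν`, written in the equivalent
squared form `W_p(μ,ν)² ≤ 2C·H(ν|μ)` in `ℝ≥0∞`. -/
def TpIneq {E : Type*} [MeasurableSpace E] (p : ℝ) (d : E → E → ℝ) (C : ℝ)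
    (μ : Measure E) : Prop :=
  ∀ ν : Measure E, IsProbabilityMeasure ν →
    wassersteinDist p d μ ν ^ 2 ≤ ENNReal.ofReal (2 * C) * relEntropy ν μ

/-- The transportation cost-information inequality `T_p(C)` for an extended pseudo-metric. -/
def TpIneqE {E : Type*} [MeasurableSpace E] (p : ℝ) (d : E → E → ℝ≥0∞) (C : ℝ)
    (μ : Measure E) : Prop :=
  ∀ ν : Measure E, IsProbabilityMeasure ν →
    wassersteinDistE p d μ ν ^ 2 ≤ ENNReal.ofReal (2 * C) * relEntropy ν μ

/-- The law on `E^n` of the (in general non-homogeneous, non-Markovian) random sequence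
determined by the successive regular conditional laws `K i : (Fin i → E) → Measure E`
of the `(i+1)`-th coordinate given the first `i` coordinates. -/
def chainMeasure {E : Type*} [MeasurableSpace E]
    (K : (i : ℕ) → (Fin i → E) → Measure E) : (n : ℕ) → Measure (Fin n → E)
  | 0 => Measure.dirac (fun i => i.elim0)
  | n + 1 => (chainMeasure K n).bind fun x => (K n x).map (Fin.snoc x)

/-!
By the Bobkov-Götze argument, `T_1(C)` makes every `L`-Lipschitz function sub-Gaussian with
parameter `L² C`: testing `T_1(C)` against the exponential tilts of `μ` bounds the log-Laplace
transform. Along the chain, integrate out the coordinates one at a time, starting with the last.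
If `f` is Lipschitz with coefficient `b k` in the `k`-th coordinate, then (C1) and the easy half of
Kantorovich duality show that the conditional expectation of `f` given all but the last coordinate,
of index `n`, has coefficients `b k + b n * a (n - k)`. Coefficients starting from the constant `α`
therefore never exceed the fixed point `L = α / (1 - r)` of `L = α + r L`, so that each of the `n`
coordinates contributes at most `L² C` to the sub-Gaussian parameter of `f`.
-/

open scoped NNReal

section Wasserstein

variable {E : Type*} [MeasurableSpace E] {μ ν : Measure E}

theorem isCoupling_prod [IsProbabilityMeasure μ] [IsProbabilityMeasure ν] :
    IsCoupling (μ.prod ν) μ ν := by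
  simp [IsCoupling]

theorem wassersteinDist_one (d : E → E → ℝ) (μ ν : Measure E) :
    wassersteinDist 1 d μ ν =
      ⨅ π : {π : Measure (E × E) // IsCoupling π μ ν}, ∫⁻ z, ENNReal.ofReal (d z.1 z.2) ∂π.1 := by
  simp only [wassersteinDist, ENNReal.rpow_one, div_one, iInf_subtype]

variable {F : Type*} [NormedAddCommGroup F] [NormedSpace ℝ F] {d : E → E → ℝ} {g : E → F} {L : ℝ≥0}

theorem IsCoupling.enorm_integral_sub_le {π : Measure (E × E)} (hπ : IsCoupling π μ ν)
    (hμ : Integrable g μ) (hν : Integrable g ν) (hg : ∀ y y', dist (g y) (g y') ≤ L * d y y') :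
    ‖∫ y, g y ∂μ - ∫ y, g y ∂ν‖ₑ ≤ L * ∫⁻ z, ENNReal.ofReal (d z.1 z.2) ∂π := by
  obtain ⟨rfl, rfl⟩ := hπ
  have hfst := hμ.comp_measurable measurable_fst
  have hsnd := hν.comp_measurable measurable_snd
  rw [integral_map measurable_fst.aemeasurable hμ.1, integral_map measurable_snd.aemeasurable hν.1]
  calc ‖∫ z, g z.1 ∂π - ∫ z, g z.2 ∂π‖ₑ = ‖∫ z, (g z.1 - g z.2) ∂π‖ₑ :=
        congrArg _ (integral_sub hfst hsnd).symm
    _ ≤ ∫⁻ z, ‖g z.1 - g z.2‖ₑ ∂π := enorm_integral_le_lintegral_enorm _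
    _ ≤ ∫⁻ z, L * ENNReal.ofReal (d z.1 z.2) ∂π := by
        refine lintegral_mono fun z => ?_
        rw [← ofReal_norm, ← dist_eq_norm, ← ENNReal.ofReal_coe_nnreal,
          ← ENNReal.ofReal_mul L.coe_nonneg]
        exact ENNReal.ofReal_le_ofReal (hg _ _)
    _ = L * ∫⁻ z, ENNReal.ofReal (d z.1 z.2) ∂π := lintegral_const_mul' _ _ ENNReal.coe_ne_top

theorem enorm_integral_sub_le_wassersteinDist [IsProbabilityMeasure μ] [IsProbabilityMeasure ν]
    (hμ : Integrable g μ) (hν : Integrable g ν) (hg : ∀ y y', dist (g y) (g y') ≤ L * d y y') :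
    ‖∫ y, g y ∂μ - ∫ y, g y ∂ν‖ₑ ≤ L * wassersteinDist 1 d μ ν := by
  have : Nonempty {π : Measure (E × E) // IsCoupling π μ ν} := ⟨⟨_, isCoupling_prod⟩⟩
  rw [wassersteinDist_one, ENNReal.mul_iInf fun h => absurd h ENNReal.coe_ne_top]
  exact le_iInf fun π => π.2.enorm_integral_sub_le hμ hν hg

theorem dist_integral_le_add_mul_of_wassersteinDist_le [IsProbabilityMeasure μ]
    [IsProbabilityMeasure ν] {g' : E → F} {δ ρ : ℝ} (hgμ : Integrable g μ) (hμ : Integrable g' μ)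
    (hν : Integrable g' ν) (hgg' : ∀ y, dist (g y) (g' y) ≤ δ)
    (hg' : ∀ y y', dist (g' y) (g' y') ≤ L * d y y') (hρ : 0 ≤ ρ)
    (hW : wassersteinDist 1 d μ ν ≤ ENNReal.ofReal ρ) :
    dist (∫ y, g y ∂μ) (∫ y, g' y ∂ν) ≤ δ + L * ρ := by
  have change_function : dist (∫ y, g y ∂μ) (∫ y, g' y ∂μ) ≤ δ := by
    rw [dist_eq_norm, ← integral_sub hgμ hμ]
    simpa using norm_integral_le_of_norm_le_const (μ := μ)
      (.of_forall fun y => (dist_eq_norm (g y) (g' y)).symm.trans_le (hgg' y))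
  have change_measure : dist (∫ y, g' y ∂μ) (∫ y, g' y ∂ν) ≤ L * ρ := by
    rw [dist_eq_norm, ← ENNReal.ofReal_le_ofReal_iff (by positivity), ofReal_norm,
      ENNReal.ofReal_mul L.coe_nonneg, ENNReal.ofReal_coe_nnreal]
    exact (enorm_integral_sub_le_wassersteinDist hμ hν hg').trans (by gcongr)
  exact (dist_triangle _ _ _).trans (add_le_add change_function change_measure)

theorem integrable_dist_of_wassersteinDist_ne_top [PseudoMetricSpace E] [OpensMeasurableSpace E]
    {x₀ : E} (hν : Integrable (fun x => dist x x₀) ν) (hW : wassersteinDist 1 dist μ ν ≠ ∞) :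
    Integrable (fun x => dist x x₀) μ := by
  obtain ⟨⟨π, rfl, rfl⟩, hcost⟩ := iInf_lt_iff.1 ((wassersteinDist_one dist μ ν).symm.trans_lt
    hW.lt_top)
  have integrable_iff (ρ : Measure E) :
      Integrable (fun x => dist x x₀) ρ ↔ ∫⁻ x, ENNReal.ofReal (dist x x₀) ∂ρ < ∞ :=
    (and_iff_right (by fun_prop)).trans
      (hasFiniteIntegral_iff_ofReal (.of_forall fun _ => dist_nonneg))
  rw [integrable_iff, lintegral_map (by fun_prop) measurable_snd] at hν
  rw [integrable_iff, lintegral_map (by fun_prop) measurable_fst]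
  calc ∫⁻ z, ENNReal.ofReal (dist z.1 x₀) ∂π
      ≤ ∫⁻ z, (ENNReal.ofReal (dist z.1 z.2) + ENNReal.ofReal (dist z.2 x₀)) ∂π := by
        refine lintegral_mono fun z => ?_
        rw [← ENNReal.ofReal_add dist_nonneg dist_nonneg]
        exact ENNReal.ofReal_le_ofReal (dist_triangle _ _ _)
    _ = ∫⁻ z, ENNReal.ofReal (dist z.1 z.2) ∂π + ∫⁻ z, ENNReal.ofReal (dist z.2 x₀) ∂π :=
        lintegral_add_right _ (by fun_prop)
    _ < ∞ := ENNReal.add_lt_top.2 ⟨hcost, hν⟩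

end Wasserstein

section Tilted

variable {E : Type*} [MeasurableSpace E] {μ : Measure E} [IsProbabilityMeasure μ] {h : E → ℝ}

theorem llr_tilted_self (hexp : Integrable (fun y => Real.exp (h y)) μ) :
    llr (μ.tilted h) μ =ᵐ[μ.tilted h] fun x => h x - Real.log (∫ y, Real.exp (h y) ∂μ) :=
  (tilted_absolutelyContinuous μ h).ae_le (log_rnDeriv_tilted_left_self hexp)

theorem integrable_llr_tilted_self (hexp : Integrable (fun y => Real.exp (h y)) μ)
    (hint : Integrable h (μ.tilted h)) : Integrable (llr (μ.tilted h) μ) (μ.tilted h) :=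
  have := isProbabilityMeasure_tilted hexp
  (integrable_congr (llr_tilted_self hexp)).2 (hint.sub (integrable_const _))

theorem integral_llr_tilted_self (hexp : Integrable (fun y => Real.exp (h y)) μ)
    (hint : Integrable h (μ.tilted h)) :
    ∫ x, llr (μ.tilted h) μ x ∂μ.tilted h =
      ∫ y, h y ∂μ.tilted h - Real.log (∫ y, Real.exp (h y) ∂μ) := by
  have := isProbabilityMeasure_tilted hexp
  rw [integral_congr_ae (llr_tilted_self hexp), integral_sub hint (integrable_const _)]
  simp

theorem relEntropy_tilted (hexp : Integrable (fun y => Real.exp (h y)) μ)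
    (hint : Integrable h (μ.tilted h)) :
    relEntropy (μ.tilted h) μ =
      ENNReal.ofReal (∫ y, h y ∂μ.tilted h - Real.log (∫ y, Real.exp (h y) ∂μ)) := by
  rw [← integral_llr_tilted_self hexp hint]
  exact if_pos ⟨tilted_absolutelyContinuous μ h, integrable_llr_tilted_self hexp hint⟩

theorem log_integral_exp_le_integral_tilted (hexp : Integrable (fun y => Real.exp (h y)) μ)
    (hint : Integrable h (μ.tilted h)) :
    Real.log (∫ y, Real.exp (h y) ∂μ) ≤ ∫ y, h y ∂μ.tilted h := by
  have := isProbabilityMeasure_tilted hexp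
  have gibbs := InformationTheory.integral_llr_add_sub_measure_univ_nonneg
    (tilted_absolutelyContinuous μ h) (integrable_llr_tilted_self hexp hint)
  simpa [integral_llr_tilted_self hexp hint] using gibbs

end Tilted

section Subgaussian

open Filter Topology

variable {Ω Ω' : Type*} [MeasurableSpace Ω] [MeasurableSpace Ω'] {μ : Measure Ω} {c : ℝ≥0}

theorem hasSubgaussianMGF_iff_lintegral {X : Ω → ℝ} :
    HasSubgaussianMGF X c μ ↔ AEMeasurable X μ ∧ ∀ t : ℝ,
      ∫⁻ ω, ENNReal.ofReal (Real.exp (t * X ω)) ∂μ ≤ ENNReal.ofReal (Real.exp (c * t ^ 2 / 2)) := by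
  have hpos (t : ℝ) : 0 ≤ᵐ[μ] fun ω => Real.exp (t * X ω) := .of_forall fun _ => (Real.exp_pos _).le
  refine ⟨fun hX => ⟨hX.aemeasurable, fun t => ?_⟩, fun ⟨hX, hle⟩ => ?_⟩
  · rw [← ofReal_integral_eq_lintegral_ofReal (hX.integrable_exp_mul t) (hpos t)]
    exact ENNReal.ofReal_le_ofReal (hX.mgf_le t)
  · have hexp (t : ℝ) : Integrable (fun ω => Real.exp (t * X ω)) μ :=
      ⟨by fun_prop, (hasFiniteIntegral_iff_ofReal (hpos t)).2 ((hle t).trans_lt ofReal_lt_top)⟩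
    refine ⟨hexp, fun t => ?_⟩
    rw [mgf, ← ENNReal.ofReal_le_ofReal_iff (Real.exp_pos _).le,
      ofReal_integral_eq_lintegral_ofReal (hexp t) (hpos t)]
    exact hle t

theorem hasSubgaussianMGF_of_tendsto {X : ℕ → Ω → ℝ} {Y : Ω → ℝ}
    (hX : ∀ N, HasSubgaussianMGF (X N) c μ)
    (hlim : ∀ᵐ ω ∂μ, Tendsto (fun N => X N ω) atTop (𝓝 (Y ω))) : HasSubgaussianMGF Y c μ := by
  have hXm (N : ℕ) := (hX N).aemeasurable
  refine hasSubgaussianMGF_iff_lintegral.2 ⟨aemeasurable_of_tendsto_metrizable_ae' hXm hlim,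
    fun t => ?_⟩
  calc ∫⁻ ω, ENNReal.ofReal (Real.exp (t * Y ω)) ∂μ
      = ∫⁻ ω, liminf (fun N => ENNReal.ofReal (Real.exp (t * X N ω))) atTop ∂μ := by
        refine lintegral_congr_ae (hlim.mono fun ω hω => (Tendsto.liminf_eq ?_).symm)
        exact ENNReal.tendsto_ofReal ((hω.const_mul t).rexp)
    _ ≤ liminf (fun N => ∫⁻ ω, ENNReal.ofReal (Real.exp (t * X N ω)) ∂μ) atTop :=
        lintegral_liminf_le' fun N => by fun_prop
    _ ≤ liminf (fun _ : ℕ => ENNReal.ofReal (Real.exp (c * t ^ 2 / 2))) atTop :=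
        liminf_le_liminf (.of_forall fun N => (hasSubgaussianMGF_iff_lintegral.1 (hX N)).2 t)
    _ = ENNReal.ofReal (Real.exp (c * t ^ 2 / 2)) := tendsto_const_nhds.liminf_eq

theorem hasSubgaussianMGF_compProd [SFinite μ] {κ : Kernel Ω Ω'} [IsSFiniteKernel κ] {c' : ℝ≥0}
    {f : Ω × Ω' → ℝ} {g : Ω → ℝ} (hf : Measurable f)
    (hfg : ∀ x, HasSubgaussianMGF (fun y => f (x, y) - g x) c (κ x))
    (hg : HasSubgaussianMGF g c' μ) : HasSubgaussianMGF f (c' + c) (μ ⊗ₘ κ) := by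
  refine hasSubgaussianMGF_iff_lintegral.2 ⟨hf.aemeasurable, fun t => ?_⟩
  have inner_le (x : Ω) : ∫⁻ y, ENNReal.ofReal (Real.exp (t * f (x, y))) ∂κ x ≤
      ENNReal.ofReal (Real.exp (c * t ^ 2 / 2)) * ENNReal.ofReal (Real.exp (t * g x)) := by
    calc ∫⁻ y, ENNReal.ofReal (Real.exp (t * f (x, y))) ∂κ x
        = ∫⁻ y, ENNReal.ofReal (Real.exp (t * (f (x, y) - g x))) *
            ENNReal.ofReal (Real.exp (t * g x)) ∂κ x := by
          refine lintegral_congr fun y => ?_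
          rw [← ENNReal.ofReal_mul (Real.exp_pos _).le, ← Real.exp_add]
          ring_nf
      _ = (∫⁻ y, ENNReal.ofReal (Real.exp (t * (f (x, y) - g x))) ∂κ x) *
            ENNReal.ofReal (Real.exp (t * g x)) := lintegral_mul_const' _ _ ENNReal.ofReal_ne_top
      _ ≤ _ := by
          gcongr
          exact (hasSubgaussianMGF_iff_lintegral.1 (hfg x)).2 t
  calc ∫⁻ z, ENNReal.ofReal (Real.exp (t * f z)) ∂μ ⊗ₘ κ
      = ∫⁻ x, ∫⁻ y, ENNReal.ofReal (Real.exp (t * f (x, y))) ∂κ x ∂μ :=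
        Measure.lintegral_compProd (by fun_prop)
    _ ≤ ∫⁻ x, ENNReal.ofReal (Real.exp (c * t ^ 2 / 2)) *
          ENNReal.ofReal (Real.exp (t * g x)) ∂μ := lintegral_mono inner_le
    _ = ENNReal.ofReal (Real.exp (c * t ^ 2 / 2)) *
          ∫⁻ x, ENNReal.ofReal (Real.exp (t * g x)) ∂μ :=
        lintegral_const_mul' _ _ ENNReal.ofReal_ne_top
    _ ≤ ENNReal.ofReal (Real.exp (c * t ^ 2 / 2)) *
          ENNReal.ofReal (Real.exp (c' * t ^ 2 / 2)) := by
        gcongr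
        exact (hasSubgaussianMGF_iff_lintegral.1 hg).2 t
    _ = ENNReal.ofReal (Real.exp ((c' + c : ℝ≥0) * t ^ 2 / 2)) := by
        rw [← ENNReal.ofReal_mul (Real.exp_pos _).le, ← Real.exp_add, NNReal.coe_add]
        ring_nf

theorem hasSubgaussianMGF_map_iff {φ : Ω → Ω'} {X : Ω' → ℝ} (hφ : AEMeasurable φ μ)
    (hX : AEMeasurable X (μ.map φ)) :
    HasSubgaussianMGF X c (μ.map φ) ↔ HasSubgaussianMGF (X ∘ φ) c μ := by
  rw [← HasSubgaussianMGF.id_map_iff hX, AEMeasurable.map_map_of_aemeasurable hX hφ,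
    HasSubgaussianMGF.id_map_iff (hX.comp_aemeasurable hφ)]

end Subgaussian

section Transportation

open Filter Topology

theorem mul_le_add_of_sq_le {D H c : ℝ} (hH : 0 ≤ H) (hc : 0 ≤ c) (hD : D ^ 2 ≤ 2 * c * H)
    (t : ℝ) : t * D ≤ H + c * t ^ 2 / 2 := by
  refine le_of_abs_le (abs_le_of_sq_le_sq ?_ (by positivity))
  calc (t * D) ^ 2 = t ^ 2 * D ^ 2 := mul_pow _ _ _
    _ ≤ t ^ 2 * (2 * c * H) := by gcongr
    _ = 4 * H * (c * t ^ 2 / 2) := by ring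
    _ ≤ (H + c * t ^ 2 / 2) ^ 2 := four_mul_le_sq_add _ _

variable {E : Type*} [MeasurableSpace E] {μ : Measure E}

theorem TpIneq.wassersteinDist_ne_top {d : E → E → ℝ} {p C : ℝ} (hT : TpIneq p d C μ)
    {ν : Measure E} [IsProbabilityMeasure ν] (hH : relEntropy ν μ ≠ ∞) :
    wassersteinDist p d μ ν ≠ ∞ := fun htop => by
  have := (hT ν inferInstance).trans_lt (ENNReal.mul_lt_top ENNReal.ofReal_lt_top hH.lt_top)
  simp [htop] at this

variable [IsProbabilityMeasure μ]

theorem TpIneq.sq_integral_sub_integral_tilted_le {d : E → E → ℝ} {C L : ℝ≥0}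
    (hT : TpIneq 1 d C μ) {g h : E → ℝ} (hg : ∀ y y', dist (g y) (g y') ≤ L * d y y')
    (hexp : Integrable (fun y => Real.exp (h y)) μ) (hint : Integrable h (μ.tilted h))
    (hgμ : Integrable g μ) (hgν : Integrable g (μ.tilted h)) :
    (∫ y, g y ∂μ - ∫ y, g y ∂μ.tilted h) ^ 2 ≤
      2 * (L ^ 2 * C) * (∫ y, h y ∂μ.tilted h - Real.log (∫ y, Real.exp (h y) ∂μ)) := by
  have := isProbabilityMeasure_tilted hexp
  have hentropy := sub_nonneg.2 (log_integral_exp_le_integral_tilted hexp hint)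
  have hW := hT (μ.tilted h) inferInstance
  rw [relEntropy_tilted hexp hint] at hW
  rw [← ENNReal.ofReal_le_ofReal_iff (by positivity), ← sq_abs, ENNReal.ofReal_pow (abs_nonneg _),
    ← Real.norm_eq_abs, ofReal_norm]
  calc ‖∫ y, g y ∂μ - ∫ y, g y ∂μ.tilted h‖ₑ ^ 2
      ≤ (L * wassersteinDist 1 d μ (μ.tilted h)) ^ 2 := by
        gcongr
        exact enorm_integral_sub_le_wassersteinDist hgμ hgν hg
    _ = L ^ 2 * wassersteinDist 1 d μ (μ.tilted h) ^ 2 := mul_pow _ _ _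
    _ ≤ L ^ 2 * (ENNReal.ofReal (2 * C) * ENNReal.ofReal _) := by gcongr
    _ = _ := by
        rw [← ENNReal.ofReal_mul (by positivity), ← ENNReal.coe_pow, ← ENNReal.ofReal_coe_nnreal,
          ← ENNReal.ofReal_mul (by positivity), NNReal.coe_pow]
        ring_nf

variable [PseudoMetricSpace E] [OpensMeasurableSpace E]

theorem TpIneq.integrable_dist {C : ℝ} (hT : TpIneq 1 dist C μ) (x₀ : E) :
    Integrable (fun x => dist x x₀) μ := by
  have hexp : Integrable (fun x => Real.exp (-dist x x₀)) μ :=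
    .of_bound (by fun_prop) 1 (.of_forall fun x => by simp)
  have hbound (x : E) : ‖Real.exp (-dist x x₀) • dist x x₀‖ ≤ 1 := by
    rw [norm_smul, Real.norm_eq_abs, Real.abs_exp, Real.norm_of_nonneg dist_nonneg, Real.exp_neg,
      inv_mul_le_one₀ (Real.exp_pos _)]
    linarith [Real.add_one_le_exp (dist x x₀)]
  have hν : Integrable (fun x => dist x x₀) (μ.tilted fun x => -dist x x₀) :=
    (integrable_tilted_iff hexp _).2 (.of_bound (by fun_prop) 1 (.of_forall hbound))
  have := isProbabilityMeasure_tilted hexp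
  refine integrable_dist_of_wassersteinDist_ne_top hν (hT.wassersteinDist_ne_top ?_)
  rw [relEntropy_tilted hexp hν.neg]
  exact ENNReal.ofReal_ne_top

variable {g : E → ℝ} {L : ℝ≥0}

theorem TpIneq.integrable_of_lipschitzWith {C : ℝ} (hT : TpIneq 1 dist C μ)
    (hg : LipschitzWith L g) : Integrable g μ := by
  obtain ⟨x₀⟩ := μ.nonempty_of_neZero
  refine (((hT.integrable_dist x₀).const_mul L).add (integrable_const ‖g x₀‖)).mono'
    hg.continuous.measurable.aestronglyMeasurable (.of_forall fun x => ?_)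
  calc ‖g x‖ ≤ ‖g x - g x₀‖ + ‖g x₀‖ := norm_le_norm_sub_add _ _
    _ ≤ L * dist x x₀ + ‖g x₀‖ := by
        gcongr
        exact hg.dist_le_mul x x₀

variable {C : ℝ≥0}

theorem TpIneq.hasSubgaussianMGF_of_bounded (hT : TpIneq 1 dist C μ) (hg : LipschitzWith L g)
    {B : ℝ} (hB : ∀ x, ‖g x‖ ≤ B) :
    HasSubgaussianMGF (fun x => g x - ∫ y, g y ∂μ) (L ^ 2 * C) μ := by
  have hgm := hg.continuous.measurable
  set m := ∫ y, g y ∂μ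
  have hexp (t : ℝ) : Integrable (fun x => Real.exp (t * (g x - m))) μ :=
    integrable_exp_mul_of_mem_Icc (a := -B - m) (b := B - m) (by fun_prop)
      (.of_forall fun x => by have := abs_le.1 (hB x); constructor <;> linarith)
  refine ⟨hexp, fun t => ?_⟩
  set ν := μ.tilted fun x => t * (g x - m)
  have := isProbabilityMeasure_tilted (hexp t)
  have hg_int (ρ : Measure E) [IsProbabilityMeasure ρ] : Integrable g ρ :=
    .of_bound hgm.aestronglyMeasurable B (.of_forall hB)
  have hh : Integrable (fun x => t * (g x - m)) ν :=
    ((hg_int ν).sub (integrable_const m)).const_mul t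
  have hentropy := log_integral_exp_le_integral_tilted (hexp t) hh
  have hsq := hT.sq_integral_sub_integral_tilted_le hg.dist_le_mul (hexp t) hh (hg_int μ) (hg_int ν)
  have hmean : ∫ x, t * (g x - m) ∂ν = -(t * (m - ∫ x, g x ∂ν)) := by
    rw [integral_const_mul, integral_sub (hg_int ν) (integrable_const m)]
    simp only [integral_const, probReal_univ, one_smul]
    ring
  rw [mgf, ← Real.log_le_iff_le_exp (integral_exp_pos (hexp t))]
  rw [hmean] at hentropy hsq
  have := mul_le_add_of_sq_le (sub_nonneg.2 hentropy) (by positivity) hsq (-t)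
  push_cast
  linarith

theorem TpIneq.hasSubgaussianMGF (hT : TpIneq 1 dist C μ) (hg : LipschitzWith L g) :
    HasSubgaussianMGF (fun x => g x - ∫ y, g y ∂μ) (L ^ 2 * C) μ := by
  let G (N : ℕ) (x : E) : ℝ := max (-N) (min (g x) N)
  have hG (N : ℕ) : LipschitzWith L (G N) := (hg.min_const N).const_max (-N)
  have hG_bounded (N : ℕ) (x : E) : ‖G N x‖ ≤ N := by
    simp only [G, Real.norm_eq_abs]
    grind
  have hG_le (N : ℕ) (x : E) : ‖G N x‖ ≤ ‖g x‖ := by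
    simp only [G, Real.norm_eq_abs]
    grind
  have hG_lim (x : E) : Tendsto (fun N => G N x) atTop (𝓝 (g x)) := by
    refine tendsto_const_nhds.congr' ?_
    filter_upwards [tendsto_natCast_atTop_atTop.eventually_ge_atTop |g x|] with N hN
    simp only [G]
    grind
  have hmean : Tendsto (fun N => ∫ x, G N x ∂μ) atTop (𝓝 (∫ x, g x ∂μ)) :=
    tendsto_integral_of_dominated_convergence (fun x => ‖g x‖)
      (fun N => (hG N).continuous.measurable.aestronglyMeasurable)
      (hT.integrable_of_lipschitzWith hg).norm (fun N => .of_forall (hG_le N)) (.of_forall hG_lim)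
  exact hasSubgaussianMGF_of_tendsto
    (fun N => hT.hasSubgaussianMGF_of_bounded (hG N) (hG_bounded N))
    (.of_forall fun x => (hG_lim x).sub hmean)

end Transportation

section Chain

theorem dist_le_sum_of_update {ι F : Type*} {X : ι → Type*} [Fintype ι] [DecidableEq ι]
    [PseudoMetricSpace F] {f : (∀ i, X i) → F} {d : ∀ i, X i → X i → ℝ}
    (hf : ∀ x i y, dist (f x) (f (Function.update x i y)) ≤ d i (x i) y) (x x' : ∀ i, X i) :
    dist (f x) (f x') ≤ ∑ i, d i (x i) (x' i) := by
  suffices h : ∀ s : Finset ι, dist (f x) (f (s.piecewise x' x)) ≤ ∑ i ∈ s, d i (x i) (x' i) by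
    simpa using h Finset.univ
  intro s
  induction s using Finset.induction_on with
  | empty => simp
  | insert i s hi ih =>
    have update_le := hf (s.piecewise x' x) i (x' i)
    rw [Finset.piecewise_eq_of_notMem _ _ _ hi] at update_le
    rw [Finset.piecewise_insert, Finset.sum_insert hi, add_comm]
    exact (dist_triangle _ _ _).trans (add_le_add ih update_le)

theorem lipschitzWith_snoc {E F : Type*} [PseudoMetricSpace E] [PseudoMetricSpace F] {n : ℕ}
    {f : (Fin (n + 1) → E) → F} {b : Fin (n + 1) → ℝ} {L : ℝ≥0}
    (hf : ∀ x x', dist (f x) (f x') ≤ ∑ k, b k * dist (x k) (x' k)) (hL : b (Fin.last n) ≤ L)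
    (x : Fin n → E) :
    LipschitzWith L fun y => f (Fin.snoc x y) :=
  .of_dist_le_mul fun y y' => calc
    dist (f (Fin.snoc x y)) (f (Fin.snoc x y')) ≤ b (Fin.last n) * dist y y' := by
      simpa [Fin.sum_univ_castSucc] using hf (Fin.snoc x y) (Fin.snoc x y')
    _ ≤ L * dist y y' := by gcongr

variable {E : Type*} [MeasurableSpace E] {n : ℕ}

theorem measurable_snoc :
    Measurable fun z : (Fin n → E) × E => (Fin.snoc z.1 z.2 : Fin (n + 1) → E) := by
  refine measurable_pi_lambda _ (Fin.lastCases ?_ fun j => ?_)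
  · simpa only [Fin.snoc_last] using measurable_snd
  · simp only [Fin.snoc_castSucc]
    fun_prop

section Kernel

variable (κ : ∀ i, Kernel (Fin i → E) E) [∀ i, IsMarkovKernel (κ i)]

theorem chainMeasure_succ (n : ℕ) [SFinite (chainMeasure (fun i => κ i) n)] :
    chainMeasure (fun i => κ i) (n + 1) =
      (chainMeasure (fun i => κ i) n ⊗ₘ κ n).map fun z => Fin.snoc z.1 z.2 := by
  rw [Measure.compProd_eq_comp_prod, Measure.map_comp _ _ measurable_snoc, chainMeasure]
  congr 1 with x : 1
  rw [Kernel.map_apply _ measurable_snoc, Kernel.prod_apply, Kernel.id_apply, Measure.dirac_prod,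
    Measure.map_map measurable_snoc measurable_prodMk_left]
  rfl

instance isProbabilityMeasure_chainMeasure (n : ℕ) :
    IsProbabilityMeasure (chainMeasure (fun i => κ i) n) := by
  induction n with
  | zero => exact Measure.dirac.isProbabilityMeasure
  | succ n ih =>
    rw [chainMeasure_succ]
    exact Measure.isProbabilityMeasure_map measurable_snoc.aemeasurable

theorem integral_chainMeasure_succ {F : Type*} [NormedAddCommGroup F] [NormedSpace ℝ F]
    {f : (Fin (n + 1) → E) → F} (hf : Integrable f (chainMeasure (fun i => κ i) (n + 1))) :
    ∫ z, f z ∂chainMeasure (fun i => κ i) (n + 1) =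
      ∫ x, ∫ y, f (Fin.snoc x y) ∂κ n x ∂chainMeasure (fun i => κ i) n := by
  rw [chainMeasure_succ] at hf ⊢
  rw [integral_map measurable_snoc.aemeasurable hf.1]
  exact Measure.integral_compProd (hf.comp_measurable measurable_snoc)

end Kernel

variable [PseudoMetricSpace E]

theorem dist_integral_snoc_le {F : Type*} [NormedAddCommGroup F] [NormedSpace ℝ F]
    {κ : (Fin n → E) → Measure E} [∀ x, IsProbabilityMeasure (κ x)]
    {f : (Fin (n + 1) → E) → F} {b : Fin (n + 1) → ℝ} {γ : Fin n → ℝ} {L : ℝ≥0}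
    (hf : ∀ x x', dist (f x) (f x') ≤ ∑ k, b k * dist (x k) (x' k)) (hL : b (Fin.last n) ≤ L)
    (hint : ∀ x x', Integrable (fun y => f (Fin.snoc x y)) (κ x')) (hγ : ∀ k, 0 ≤ γ k)
    (hW : ∀ x x', wassersteinDist 1 dist (κ x) (κ x') ≤
      ENNReal.ofReal (∑ k, γ k * dist (x k) (x' k))) (x x' : Fin n → E) :
    dist (∫ y, f (Fin.snoc x y) ∂κ x) (∫ y, f (Fin.snoc x' y) ∂κ x') ≤
      ∑ k, (b k.castSucc + L * γ k) * dist (x k) (x' k) := by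
  have hpast (y : E) : dist (f (Fin.snoc x y)) (f (Fin.snoc x' y)) ≤
      ∑ k : Fin n, b k.castSucc * dist (x k) (x' k) := by
    simpa [Fin.sum_univ_castSucc] using hf (Fin.snoc x y) (Fin.snoc x' y)
  refine (dist_integral_le_add_mul_of_wassersteinDist_le (hint x x) (hint x' x) (hint x' x') hpast
    (lipschitzWith_snoc hf hL x').dist_le_mul
    (Finset.sum_nonneg fun k _ => mul_nonneg (hγ k) dist_nonneg) (hW x x')).trans_eq ?_
  simp only [Finset.mul_sum, add_mul, Finset.sum_add_distrib, mul_assoc]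

theorem hasSubgaussianMGF_chainMeasure [OpensMeasurableSpace E]
    (κ : ∀ i, Kernel (Fin i → E) E) [∀ i, IsMarkovKernel (κ i)]
    {C L : ℕ → ℝ≥0} {γ : ℕ → ℕ → ℝ} (hγ : ∀ i k, 0 ≤ γ i k)
    (hT : ∀ i x, TpIneq 1 dist (C i) (κ i x))
    (hW : ∀ i x x', wassersteinDist 1 dist (κ i x) (κ i x') ≤
      ENNReal.ofReal (∑ k : Fin i, γ i k * dist (x k) (x' k)))
    {f : (Fin n → E) → ℝ} (hfm : Measurable f) {b : Fin n → ℝ}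
    (hf : ∀ x x', dist (f x) (f x') ≤ ∑ k, b k * dist (x k) (x' k))
    (hb : ∀ k : Fin n, b k + ∑ i ∈ Finset.Ico (k + 1 : ℕ) n, L i * γ i k ≤ L k) :
    HasSubgaussianMGF (fun x => f x - ∫ z, f z ∂chainMeasure (fun i => κ i) n)
      (∑ i ∈ Finset.range n, L i ^ 2 * C i) (chainMeasure (fun i => κ i) n) := by
  induction n with
  | zero =>
    simp [chainMeasure, Subsingleton.elim _ (fun i : Fin 0 => i.elim0)]
  | succ n ih =>
    have hL : b (Fin.last n) ≤ L n := by simpa using hb (Fin.last n)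
    have hint (x x' : Fin n → E) : Integrable (fun y => f (Fin.snoc x y)) (κ n x') :=
      (hT n x').integrable_of_lipschitzWith (lipschitzWith_snoc hf hL x)
    let g (x : Fin n → E) : ℝ := ∫ y, f (Fin.snoc x y) ∂κ n x
    have hgm : Measurable g :=
      (hfm.comp measurable_snoc).stronglyMeasurable.integral_kernel_prod_right'.measurable
    have hg := ih hgm (dist_integral_snoc_le hf hL hint (fun k => hγ n k) (hW n)) fun k => by
      have := hb k.castSucc
      rw [Fin.val_castSucc, Finset.sum_Ico_succ_top (by omega)] at this
      linarith
    set m := ∫ x, g x ∂chainMeasure (fun i => κ i) n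
    have hsub : HasSubgaussianMGF (fun x => f x - m)
        (∑ i ∈ Finset.range n, L i ^ 2 * C i + L n ^ 2 * C n)
        (chainMeasure (fun i => κ i) (n + 1)) := by
      rw [chainMeasure_succ, hasSubgaussianMGF_map_iff measurable_snoc.aemeasurable (by fun_prop)]
      refine hasSubgaussianMGF_compProd ((hfm.comp measurable_snoc).sub_const m) (fun x => ?_) hg
      simpa [g] using (hT n x).hasSubgaussianMGF (lipschitzWith_snoc hf hL x)
    have hmean : ∫ z, f z ∂chainMeasure (fun i => κ i) (n + 1) = m :=
      integral_chainMeasure_succ κ <| by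
        simpa only [sub_eq_add_neg, integrable_add_const_iff] using hsub.integrable
    rwa [hmean, Finset.sum_range_succ]

theorem sum_Ico_sub_le_tsum {a : ℕ → ℝ} (ha : ∀ j, 0 ≤ a (j + 1))
    (hsum : Summable fun j => a (j + 1)) (k n : ℕ) :
    ∑ i ∈ Finset.Ico (k + 1) n, a (i - k) ≤ ∑' j, a (j + 1) := by
  rw [Finset.sum_Ico_eq_sum_range]
  refine (Finset.sum_congr rfl fun j _ => ?_).trans_le
    (hsum.sum_le_tsum (Finset.range (n - (k + 1))) fun j _ => ha j)
  congr 1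
  omega

theorem add_sum_Ico_mul_le {a : ℕ → ℝ} (ha : ∀ j, 0 ≤ a (j + 1))
    (hsum : Summable fun j => a (j + 1)) {r α : ℝ} (hr : r = ∑' j, a (j + 1)) (hr1 : r < 1)
    (hα : 0 ≤ α) (k n : ℕ) :
    α + ∑ i ∈ Finset.Ico (k + 1) n, α / (1 - r) * a (i - k) ≤ α / (1 - r) := by
  have h1r : 0 < 1 - r := sub_pos.2 hr1
  calc α + ∑ i ∈ Finset.Ico (k + 1) n, α / (1 - r) * a (i - k) ≤ α + α / (1 - r) * r := by
        rw [← Finset.mul_sum]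
        gcongr
        exact (sum_Ico_sub_le_tsum ha hsum k n).trans_eq hr.symm
    _ = α / (1 - r) := by field

end Chain

theorem hoeffding_dependent_tensorization_general
    {E : Type*} [MeasurableSpace E] [PseudoMetricSpace E] [OpensMeasurableSpace E]
    (C : ℝ) (hC : 0 < C) (n : ℕ)
    (K : (i : ℕ) → (Fin i → E) → Measure E)
    (hKm : ∀ i, Measurable (K i)) (hKp : ∀ i x, IsProbabilityMeasure (K i x))
    (hT : ∀ (i : ℕ) (x : Fin i → E), TpIneq 1 dist C (K i x))
    (a : ℕ → ℝ) (ha : ∀ j, 0 ≤ a j)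
    (hsum : Summable fun j : ℕ => a (j + 1))
    (r : ℝ) (hrp : r = ∑' j : ℕ, a (j + 1)) (hr1 : r < 1)
    (hC1 : ∀ (i : ℕ) (x x' : Fin i → E),
      wassersteinDist 1 dist (K i x) (K i x') ≤
        ENNReal.ofReal (∑ k : Fin i, a (i - (k : ℕ)) * dist (x k) (x' k)))
    (f : (Fin n → E) → ℝ) (hfm : Measurable f) (α : ℝ) (hα : 0 < α)
    (hflip : ∀ (x : Fin n → E) (k : Fin n) (y : E),
      |f x - f (Function.update x k y)| ≤ α * dist (x k) y) :
    (∀ l : ℝ,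
      ∫ x, Real.exp (l * (f x - ∫ z, f z ∂chainMeasure K n)) ∂chainMeasure K n ≤
        Real.exp (C * l ^ 2 * α ^ 2 * n / (2 * (1 - r) ^ 2))) ∧
    ∀ t : ℝ, 0 < t →
      chainMeasure K n {x | (∫ z, f z ∂chainMeasure K n) + t < f x} ≤
        ENNReal.ofReal (Real.exp (-(t ^ 2 * (1 - r) ^ 2) / (2 * n * C * α ^ 2))) := by
  obtain ⟨κ, rfl⟩ : ∃ κ : ∀ i, Kernel (Fin i → E) E, K = fun i => ⇑(κ i) :=
    ⟨fun i => ⟨K i, hKm i⟩, rfl⟩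
  have (i : ℕ) : IsMarkovKernel (κ i) := ⟨hKp i⟩
  lift C to ℝ≥0 using hC.le
  have hr : 0 < 1 - r := sub_pos.2 hr1
  obtain ⟨L, hL⟩ : ∃ L : ℝ≥0, (L : ℝ) = α / (1 - r) := ⟨⟨_, by positivity⟩, rfl⟩
  have hb (k : Fin n) : α + ∑ i ∈ Finset.Ico (k + 1 : ℕ) n, L * a (i - k) ≤ L := by
    rw [hL]
    exact add_sum_Ico_mul_le (fun _ => ha _) hsum hrp hr1 hα.le k n
  have hdist := dist_le_sum_of_update (X := fun _ => E) (f := f)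
    (d := fun _ y y' => α * dist y y') hflip
  have hsub := hasSubgaussianMGF_chainMeasure κ (C := fun _ => C) (L := fun _ => L)
    (fun i k => ha (i - k)) hT hC1 hfm hdist hb
  simp only [Finset.sum_const, Finset.card_range] at hsub
  set m := ∫ z, f z ∂chainMeasure (fun i => κ i) n
  refine ⟨fun l => (hsub.mgf_le l).trans_eq ?_, fun t ht => ?_⟩
  · push_cast [hL, nsmul_eq_mul]
    congr 1
    field
  · have hle : {x | m + t < f x} ⊆ {x | t ≤ f x - m} :=
      Set.ofPred_subset_ofPred.2 fun x hx => (lt_sub_iff_add_lt'.2 hx).le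
    refine (measure_mono hle).trans ?_
    rw [← ofReal_measureReal]
    refine ENNReal.ofReal_le_ofReal ((hsub.measure_ge_le ht.le).trans_eq ?_)
    push_cast [hL, nsmul_eq_mul]
    congr 1
    field

/-- **Corollary 2.6: Hoeffding-type inequality** for functions that are `α`-Lipschitz in each
coordinate, under the assumptions of Theorem 2.5 with `p = 1`. -/
theorem hoeffding_dependent_tensorization
    {E : Type*} [MeasurableSpace E] [MetricSpace E] [CompleteSpace E]
    [SecondCountableTopology E] [BorelSpace E]
    (C : ℝ) (hC : 0 < C) (n : ℕ)
    (K : (i : ℕ) → (Fin i → E) → Measure E)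
    (hKm : ∀ i, Measurable (K i)) (hKp : ∀ i x, IsProbabilityMeasure (K i x))
    (hT : ∀ (i : ℕ) (x : Fin i → E), TpIneq 1 dist C (K i x))
    (a : ℕ → ℝ) (ha : ∀ j, 0 ≤ a j)
    (hsum : Summable fun j : ℕ => a (j + 1))
    (r : ℝ) (hr0 : 0 ≤ r) (hrp : r = ∑' j : ℕ, a (j + 1)) (hr1 : r < 1)
    (hC1 : ∀ (i : ℕ) (x x' : Fin i → E),
      wassersteinDist 1 dist (K i x) (K i x') ≤
        ENNReal.ofReal (∑ k : Fin i, a (i - (k : ℕ)) * dist (x k) (x' k)))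
    (f : (Fin n → E) → ℝ) (hfm : Measurable f) (α : ℝ) (hα : 0 < α)
    (hflip : ∀ (x : Fin n → E) (k : Fin n) (y : E),
      |f x - f (Function.update x k y)| ≤ α * dist (x k) y) :
    (∀ l : ℝ,
      ∫ x, Real.exp (l * (f x - ∫ z, f z ∂chainMeasure K n)) ∂chainMeasure K n ≤
        Real.exp (C * l ^ 2 * α ^ 2 * n / (2 * (1 - r) ^ 2))) ∧
    ∀ t : ℝ, 0 < t →
      chainMeasure K n {x | (∫ z, f z ∂chainMeasure K n) + t < f x} ≤
        ENNReal.ofReal (Real.exp (-(t ^ 2 * (1 - r) ^ 2) / (2 * n * C * α ^ 2))) :=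
  hoeffding_dependent_tensorization_general C hC n K hKm hKp hT a ha hsum r hrp hr1 hC1 f hfm α hα
    hflip

end
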